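/- arXiv:1803.01587 — 2 statements merged into one kernel-verified Lean document; each statement's English description precedes it below -/
import Mathlib

section
/- Uniqueness of the zero under perturbation: Under the quantitative hypotheses (⋆), for every ε ∈ (0, ε₀] the map x ↦ y(ε,x) is injective on the closed ball B̄(p,R); in particular, for every ε ∈ (0, ε₀] there is at most one x ∈ B̄(p,R) with y(ε,x) = 0. -/
open Metric Set

/-- If `c` lies below the co-norm `‖A⁻¹‖⁻¹` of a continuous linear equivalence `A`, then
`‖A v‖ ≤ c * r` forces `‖v‖ < r`. -/
lemma norm_lt_of_norm_apply_le {E F : Type*} [NormedAddCommGroup E] [NormedSpace ℝ E]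
    [NormedAddCommGroup F] [NormedSpace ℝ F] (A : E ≃L[ℝ] F) {c r : ℝ} (hc : 0 ≤ c) (hr : 0 < r)
    (h : c < ‖(A.symm : F →L[ℝ] E)‖⁻¹) {v : E} (hv : ‖A v‖ ≤ c * r) : ‖v‖ < r := by
  have hpos : 0 < ‖(A.symm : F →L[ℝ] E)‖ := inv_pos.mp (hc.trans_lt h)
  have hle : ‖v‖ ≤ ‖(A.symm : F →L[ℝ] E)‖ * ‖A v‖ := by
    simpa using (A.symm : F →L[ℝ] E).le_opNorm (A v)
  calc ‖v‖ ≤ ‖(A.symm : F →L[ℝ] E)‖ * (c * r) := hle.trans (by gcongr)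
    _ < ‖(A.symm : F →L[ℝ] E)‖ * (‖(A.symm : F →L[ℝ] E)‖⁻¹ * r) := by gcongr
    _ = r := by field_simp

/-- If `f (0, ·)` vanishes on a closed ball and the mixed derivative of `f` is `δ`-close to `L`,
then `f (ε, ·) - ε • L` is Lipschitz on the ball with constant `δ * ε`. -/
lemma norm_sub_sub_smul_le_of_norm_deriv_fderiv_sub_le {E F : Type*}
    [NormedAddCommGroup E] [NormedSpace ℝ E] [NormedAddCommGroup F] [NormedSpace ℝ F]
    {f : ℝ × E → F} (hf : ContDiff ℝ 2 f) {p : E} {R : ℝ} (hR : 0 < R)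
    (h0 : ∀ x ∈ closedBall p R, f (0, x) = 0) (L : E →L[ℝ] F) {δ ε : ℝ} (hε : 0 ≤ ε)
    (hδ : ∀ t ∈ Icc (0 : ℝ) ε, ∀ x ∈ closedBall p R,
      ‖deriv (fun s => fderiv ℝ (fun z => f (s, z)) x) t - L‖ ≤ δ)
    {x x' : E} (hx : x ∈ closedBall p R) (hx' : x' ∈ closedBall p R) :
    ‖f (ε, x') - f (ε, x) - ε • L (x' - x)‖ ≤ δ * ε * ‖x' - x‖ := by
  have hd (s : ℝ) : Differentiable ℝ fun z => f (s, z) :=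
    (hf.comp (contDiff_const.prodMk contDiff_id)).differentiable (by norm_num)
  have hF (z : E) : Differentiable ℝ fun s => fderiv ℝ (fun w => f (s, w)) z := by
    have : ContDiff ℝ 1 fun s : ℝ => fderiv ℝ (fun w => f (s, w)) z :=
      ContDiff.fderiv (f := fun (s : ℝ) w => f (s, w)) (m := 2) hf contDiff_const (by norm_num)
    exact this.differentiable (by norm_num)
  have hF0 {z : E} (hz : z ∈ closedBall p R) : fderiv ℝ (fun w => f (0, w)) z = 0 := by
    have hu : UniqueDiffWithinAt ℝ (closedBall p R) z :=
      uniqueDiffOn_convex (convex_closedBall p R)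
        ⟨p, ball_subset_interior_closedBall (mem_ball_self hR)⟩ z hz
    rw [← (hd 0 z).fderivWithin hu, fderivWithin_congr (f := fun _ => (0 : F)) h0 (h0 z hz)]
    simp
  have key {z : E} (hz : z ∈ closedBall p R) :
      ‖fderiv ℝ (fun w => f (ε, w)) z - ε • L‖ ≤ δ * ε := by
    have hG (s : ℝ) : HasDerivAt (fun s => fderiv ℝ (fun w => f (s, w)) z - s • L)
        (deriv (fun s => fderiv ℝ (fun w => f (s, w)) z) s - L) s := by
      have h := (hF z s).hasDerivAt.sub ((hasDerivAt_id s).smul_const L)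
      rw [one_smul] at h
      exact h
    have := (convex_Icc (0 : ℝ) ε).norm_image_sub_le_of_norm_hasDerivWithin_le
      (fun s _ => (hG s).hasDerivWithinAt) (fun s hs => hδ s hs z hz)
      (left_mem_Icc.2 hε) (right_mem_Icc.2 hε)
    simpa [hF0 hz, abs_of_nonneg hε] using this
  simpa using (convex_closedBall p R).norm_image_sub_le_of_norm_fderiv_le'
    (fun z _ => hd ε z) (fun z hz => key hz) hx hx'

/-- **Uniqueness of the zero under perturbation.**
Under the quantitative hypotheses (⋆), for every `ε ∈ (0, ε₀]` the map
`x ↦ y (ε, x)` is injective on the closed ball; in particular there is at most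
one zero in the closed ball. -/
theorem uniqueness_of_zero_under_perturbation
    {X₁ X₂ : Type*}
    [NormedAddCommGroup X₁] [NormedSpace ℝ X₁] [FiniteDimensional ℝ X₁]
    [NormedAddCommGroup X₂] [NormedSpace ℝ X₂] [FiniteDimensional ℝ X₂]
    (y : ℝ × (X₁ × X₂) → X₁ × X₂)
    (ε₀ R : ℝ) (hε₀ : 0 < ε₀) (hR : 0 < R)
    (p : X₁ × X₂)
    (hy : ContDiff ℝ 2 y)
    (hyp : y (0, p) = 0)
    (hy₂ : ∀ x ∈ closedBall p R, (y (0, x)).2 = 0)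
    (A₁₁ : X₁ ≃L[ℝ] X₁) (A₂₂ : X₂ ≃L[ℝ] X₂)
    (hA₁₁ : (A₁₁ : X₁ →L[ℝ] X₁) = fderiv ℝ (fun x₁ => (y (0, (x₁, p.2))).1) p.1)
    (hA₂₂ : (A₂₂ : X₂ →L[ℝ] X₂)
      = deriv (fun ε => fderiv ℝ (fun x₂ => (y (ε, (p.1, x₂))).2) p.2) 0)
    (δ₁ δ₂ η₁ η₂ : ℝ)
    (hδ₁0 : 0 ≤ δ₁) (hδ₂0 : 0 ≤ δ₂) (hη₁0 : 0 ≤ η₁) (hη₂0 : 0 ≤ η₂)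
    (hδ₁ : ∀ ε ∈ Icc (0:ℝ) ε₀, ∀ x ∈ closedBall p R,
      ‖fderiv ℝ (fun x' => (y (ε, x')).1) x
        - (A₁₁ : X₁ →L[ℝ] X₁).comp (ContinuousLinearMap.fst ℝ X₁ X₂)‖ ≤ δ₁)
    (hδ₂ : ∀ ε ∈ Icc (0:ℝ) ε₀, ∀ x ∈ closedBall p R,
      ‖deriv (fun ε' => fderiv ℝ (fun x' => (y (ε', x')).2) x) ε
        - (A₂₂ : X₂ →L[ℝ] X₂).comp (ContinuousLinearMap.snd ℝ X₁ X₂)‖ ≤ δ₂)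
    (hη₁ : ∀ ε ∈ Icc (0:ℝ) ε₀, ‖deriv (fun ε' => (y (ε', p)).1) ε‖ ≤ η₁)
    (hη₂ : ∀ ε ∈ Icc (0:ℝ) ε₀, ‖deriv (fun ε' => (y (ε', p)).2) ε‖ ≤ η₂)
    (hm₁ : ε₀ * η₁ + δ₁ * R < ‖(A₁₁.symm : X₁ →L[ℝ] X₁)‖⁻¹ * R)
    (hm₂ : η₂ + δ₂ * R < ‖(A₂₂.symm : X₂ →L[ℝ] X₂)‖⁻¹ * R) :
    (∀ ε ∈ Ioc (0:ℝ) ε₀, Set.InjOn (fun x => y (ε, x)) (closedBall p R)) ∧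
    ∀ ε ∈ Ioc (0:ℝ) ε₀, ∀ x ∈ closedBall p R, ∀ x' ∈ closedBall p R,
      y (ε, x) = 0 → y (ε, x') = 0 → x = x' := by
  have inj : ∀ ε ∈ Ioc (0:ℝ) ε₀, Set.InjOn (fun x => y (ε, x)) (closedBall p R) := by
    intro ε hε x hx x' hx' hxx'
    have hxy : y (ε, x) = y (ε, x') := hxx'
    by_contra hne
    have hd : 0 < ‖x' - x‖ := norm_pos_iff.2 (sub_ne_zero.2 (Ne.symm hne))
    have hc₁ : δ₁ < ‖(A₁₁.symm : X₁ →L[ℝ] X₁)‖⁻¹ := by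
      refine lt_of_mul_lt_mul_right (lt_of_le_of_lt ?_ hm₁) hR.le
      have := mul_nonneg hε₀.le hη₁0
      linarith
    have hc₂ : δ₂ < ‖(A₂₂.symm : X₂ →L[ℝ] X₂)‖⁻¹ :=
      lt_of_mul_lt_mul_right (lt_of_le_of_lt (by linarith) hm₂) hR.le
    have h₁ : ‖A₁₁ (x' - x).1‖ ≤ δ₁ * ‖x' - x‖ := by
      have hdiff : Differentiable ℝ fun z => (y (ε, z)).1 :=
        (hy.fst.comp (contDiff_const.prodMk contDiff_id)).differentiable (by norm_num)
      have := (convex_closedBall p R).norm_image_sub_le_of_norm_fderiv_le'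
        (fun z _ => hdiff z) (hδ₁ ε ⟨hε.1.le, hε.2⟩) hx hx'
      rw [hxy, sub_self, zero_sub, norm_neg] at this
      exact this
    have h₂ : ‖A₂₂ (x' - x).2‖ ≤ δ₂ * ‖x' - x‖ := by
      have := norm_sub_sub_smul_le_of_norm_deriv_fderiv_sub_le hy.snd hR hy₂
        ((A₂₂ : X₂ →L[ℝ] X₂).comp (ContinuousLinearMap.snd ℝ X₁ X₂)) hε.1.le
        (fun t ht => hδ₂ t ⟨ht.1, ht.2.trans hε.2⟩) hx hx'
      rw [hxy, sub_self, zero_sub, norm_neg, norm_smul, Real.norm_of_nonneg hε.1.le,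
        mul_right_comm, mul_comm] at this
      exact le_of_mul_le_mul_right this hε.1
    exact lt_irrefl ‖x' - x‖ (max_lt (norm_lt_of_norm_apply_le A₁₁ hδ₁0 hd hc₁ h₁)
      (norm_lt_of_norm_apply_le A₂₂ hδ₂0 hd hc₂ h₂))
  exact ⟨inj, fun ε hε x hx x' hx' h h' => inj ε hε hx hx' (h.trans h'.symm)⟩
end

section
/- Transversal intersection of center-unstable and center-stable manifolds: In the NHIM setting with equal-dimensional stable and unstable directions, suppose that for some identification ℝ^k = X₁ × X₂ and some point p and radius R > 0 with the closed ball B̄(p,R) contained in U, the distance function y satisfies the quantitative hypotheses (⋆). Fix ε ∈ (0, ε₀]. Then there exists x* ∈ B(p,R) with q := w^{cu}(ε, cu(ε, x*, z*)) = w^{cs}(ε, cs(ε, x*, z*)), and, writing G^{cu}(x,z) := (x, π_y w^{cu}(ε, cu(ε,x,z)), z) and G^{cs}(x,z) := (x, π_y w^{cs}(ε, cs(ε,x,z)), z) for the graph parameterizations of the two manifolds over U × V, the ranges of the derivatives D G^{cu}(x*, z*) and D G^{cs}(x*, z*) (each a linear map ℝ^k × ℝ^c → ℝ^{2k+c}) together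 span ℝ^{2k+c}; i.e. the manifolds intersect transversally at q. -/
open Metric Set

/-- A contraction of a closed ball that maps into the open ball has a fixed point in the open
ball. -/
theorem exists_fixedPoint_mem_ball {X : Type*} [NormedAddCommGroup X] [CompleteSpace X]
    {T : X → X} {p : X} {R K : ℝ} (hR : 0 < R) (hK0 : 0 ≤ K) (hK : K < 1)
    (hmap : ∀ x ∈ closedBall p R, T x ∈ ball p R)
    (hlip : ∀ x ∈ closedBall p R, ∀ x' ∈ closedBall p R, ‖T x - T x'‖ ≤ K * ‖x - x'‖) :
    ∃ x ∈ ball p R, T x = x := by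
  have hmaps : MapsTo T (closedBall p R) (closedBall p R) :=
    fun x hx => ball_subset_closedBall (hmap x hx)
  have hcontr : ContractingWith ⟨K, hK0⟩ (hmaps.restrict T _ _) := by
    refine ⟨by exact_mod_cast hK, LipschitzWith.of_dist_le_mul fun x x' => ?_⟩
    rw [Subtype.dist_eq, Subtype.dist_eq, dist_eq_norm, dist_eq_norm]
    exact hlip x x.2 x' x'.2
  obtain ⟨x, hx, hfix, -⟩ := hcontr.exists_fixedPoint' isClosed_closedBall.isComplete hmaps
    (mem_closedBall_self hR.le) (edist_ne_top _ _)
  exact ⟨x, hfix ▸ hmap x hx, hfix⟩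

/-- If the derivative of `g` is `d`-close to `A ∘ π` on a convex set, the preconditioned map
`π - A⁻¹ ∘ g` is Lipschitz there with constant `‖A⁻¹‖ d`. -/
theorem norm_sub_symm_comp_sub_le {X Y : Type*} [NormedAddCommGroup X] [NormedSpace ℝ X]
    [NormedAddCommGroup Y] [NormedSpace ℝ Y] {g : X → Y} (hg : Differentiable ℝ g)
    (A : Y ≃L[ℝ] Y) (π : X →L[ℝ] Y) {s : Set X} (hs : Convex ℝ s) {d : ℝ}
    (hd : ∀ x ∈ s, ‖fderiv ℝ g x - (A : Y →L[ℝ] Y).comp π‖ ≤ d)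
    {x x' : X} (hx : x ∈ s) (hx' : x' ∈ s) :
    ‖(π x - A.symm (g x)) - (π x' - A.symm (g x'))‖
      ≤ ‖(A.symm : Y →L[ℝ] Y)‖ * d * ‖x - x'‖ := by
  have hmv := hs.norm_image_sub_le_of_norm_fderiv_le' (fun u _ => hg u) hd hx' hx
  have heq : (π x - A.symm (g x)) - (π x' - A.symm (g x'))
      = -(A.symm : Y →L[ℝ] Y) (g x - g x' - ((A : Y →L[ℝ] Y).comp π) (x - x')) := by
    simp only [map_sub, ContinuousLinearMap.comp_apply, ContinuousLinearEquiv.coe_coe,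
      ContinuousLinearEquiv.symm_apply_apply]
    abel
  rw [heq, norm_neg, mul_assoc]
  exact (ContinuousLinearMap.le_opNorm _ _).trans (by gcongr)

/-- A linear map that is `d`-close to `A ∘ π` vanishes only on vectors `v` with
`‖π v‖ ≤ ‖A⁻¹‖ d ‖v‖`. -/
theorem norm_proj_le_of_apply_eq_zero {X Y : Type*} [NormedAddCommGroup X] [NormedSpace ℝ X]
    [NormedAddCommGroup Y] [NormedSpace ℝ Y] (B : X →L[ℝ] Y)
    (A : Y ≃L[ℝ] Y) (π : X →L[ℝ] Y) {d : ℝ}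
    (hd : ‖B - (A : Y →L[ℝ] Y).comp π‖ ≤ d) {v : X} (hv : B v = 0) :
    ‖π v‖ ≤ ‖(A.symm : Y →L[ℝ] Y)‖ * d * ‖v‖ := by
  have heq : π v = -(A.symm : Y →L[ℝ] Y) ((B - (A : Y →L[ℝ] Y).comp π) v) := by
    simp [hv]
  rw [heq, norm_neg, mul_assoc]
  refine (ContinuousLinearMap.le_opNorm _ _).trans ?_
  gcongr
  exact ContinuousLinearMap.le_of_opNorm_le _ hd _

/-- Consequences of `e + d R < a⁻¹ R` for a contraction argument. -/
theorem mul_add_mul_lt_of_lt_inv_mul {a d e R : ℝ} (ha : 0 ≤ a) (hd : 0 ≤ d) (he : 0 ≤ e)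
    (hR : 0 < R) (h : e + d * R < a⁻¹ * R) :
    a * d * R + a * e < R ∧ a * d < 1 := by
  have ha' : 0 < a := by
    rcases ha.eq_or_lt with rfl | h'
    · rw [inv_zero, zero_mul] at h
      nlinarith [mul_nonneg hd hR.le]
    · exact h'
  have h1 : a * (e + d * R) < R := by
    calc a * (e + d * R) < a * (a⁻¹ * R) := by gcongr
      _ = R := by field_simp
  refine ⟨by linarith, ?_⟩
  have h2 : a * d * R < 1 * R := by nlinarith [mul_nonneg ha he]
  exact lt_of_mul_lt_mul_right h2 hR.le

/-- A pair of maps on a product whose derivatives are close to `A₁ ∘ fst` and `A₂ ∘ snd`, and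
which are small at the centre of a ball, has a nondegenerate common zero in the ball. -/
theorem exists_nondegenerate_zero_mem_ball {X₁ X₂ : Type*}
    [NormedAddCommGroup X₁] [NormedSpace ℝ X₁] [CompleteSpace X₁]
    [NormedAddCommGroup X₂] [NormedSpace ℝ X₂] [CompleteSpace X₂]
    {g₁ : X₁ × X₂ → X₁} {g₂ : X₁ × X₂ → X₂}
    (hg₁ : Differentiable ℝ g₁) (hg₂ : Differentiable ℝ g₂)
    {p : X₁ × X₂} {R : ℝ} (hR : 0 < R) (A₁ : X₁ ≃L[ℝ] X₁) (A₂ : X₂ ≃L[ℝ] X₂)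
    {d₁ d₂ e₁ e₂ : ℝ} (hd₁0 : 0 ≤ d₁) (hd₂0 : 0 ≤ d₂)
    (hd₁ : ∀ x ∈ closedBall p R, ‖fderiv ℝ g₁ x
      - (A₁ : X₁ →L[ℝ] X₁).comp (ContinuousLinearMap.fst ℝ X₁ X₂)‖ ≤ d₁)
    (hd₂ : ∀ x ∈ closedBall p R, ‖fderiv ℝ g₂ x
      - (A₂ : X₂ →L[ℝ] X₂).comp (ContinuousLinearMap.snd ℝ X₁ X₂)‖ ≤ d₂)
    (he₁ : ‖g₁ p‖ ≤ e₁) (he₂ : ‖g₂ p‖ ≤ e₂)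
    (hm₁ : e₁ + d₁ * R < ‖(A₁.symm : X₁ →L[ℝ] X₁)‖⁻¹ * R)
    (hm₂ : e₂ + d₂ * R < ‖(A₂.symm : X₂ →L[ℝ] X₂)‖⁻¹ * R) :
    ∃ x ∈ ball p R, g₁ x = 0 ∧ g₂ x = 0 ∧
      ∀ v, fderiv ℝ g₁ x v = 0 → fderiv ℝ g₂ x v = 0 → v = 0 := by
  obtain ⟨hs₁, hk₁⟩ := mul_add_mul_lt_of_lt_inv_mul (norm_nonneg _) hd₁0
    ((norm_nonneg _).trans he₁) hR hm₁
  obtain ⟨hs₂, hk₂⟩ := mul_add_mul_lt_of_lt_inv_mul (norm_nonneg _) hd₂0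
    ((norm_nonneg _).trans he₂) hR hm₂
  set a₁ := ‖(A₁.symm : X₁ →L[ℝ] X₁)‖
  set a₂ := ‖(A₂.symm : X₂ →L[ℝ] X₂)‖
  have ha₁ : 0 ≤ a₁ := norm_nonneg _
  have ha₂ : 0 ≤ a₂ := norm_nonneg _
  set K := max (a₁ * d₁) (a₂ * d₂)
  have hK : K < 1 := max_lt hk₁ hk₂
  have hp : p ∈ closedBall p R := mem_closedBall_self hR.le
  have L₁ : ∀ x ∈ closedBall p R, ∀ x' ∈ closedBall p R,
      ‖(x.1 - A₁.symm (g₁ x)) - (x'.1 - A₁.symm (g₁ x'))‖ ≤ a₁ * d₁ * ‖x - x'‖ :=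
    fun x hx x' hx' => norm_sub_symm_comp_sub_le hg₁ A₁ (ContinuousLinearMap.fst ℝ X₁ X₂)
      (convex_closedBall p R) hd₁ hx hx'
  have L₂ : ∀ x ∈ closedBall p R, ∀ x' ∈ closedBall p R,
      ‖(x.2 - A₂.symm (g₂ x)) - (x'.2 - A₂.symm (g₂ x'))‖ ≤ a₂ * d₂ * ‖x - x'‖ :=
    fun x hx x' hx' => norm_sub_symm_comp_sub_le hg₂ A₂ (ContinuousLinearMap.snd ℝ X₁ X₂)
      (convex_closedBall p R) hd₂ hx hx'
  obtain ⟨x, hx, hfix⟩ := exists_fixedPoint_mem_ball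
    (T := fun x : X₁ × X₂ => (x.1 - A₁.symm (g₁ x), x.2 - A₂.symm (g₂ x))) (p := p) hR
    (K := K) (le_max_of_le_left (by positivity)) hK
    (fun x hx => by
      have hxR : ‖x - p‖ ≤ R := by simpa [dist_eq_norm] using hx
      have b₁ : ‖A₁.symm (g₁ p)‖ ≤ a₁ * e₁ :=
        ((A₁.symm : X₁ →L[ℝ] X₁).le_opNorm _).trans (by gcongr)
      have b₂ : ‖A₂.symm (g₂ p)‖ ≤ a₂ * e₂ :=
        ((A₂.symm : X₂ →L[ℝ] X₂).le_opNorm _).trans (by gcongr)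
      rw [mem_ball, dist_eq_norm, Prod.norm_def]
      refine max_lt ?_ ?_
      · calc ‖x.1 - A₁.symm (g₁ x) - p.1‖
            = ‖((x.1 - A₁.symm (g₁ x)) - (p.1 - A₁.symm (g₁ p))) - A₁.symm (g₁ p)‖ := by
              congr 1; abel
          _ ≤ a₁ * d₁ * ‖x - p‖ + a₁ * e₁ :=
              (norm_sub_le _ _).trans (add_le_add (L₁ x hx p hp) b₁)
          _ ≤ a₁ * d₁ * R + a₁ * e₁ := by gcongr
          _ < R := hs₁
      · calc ‖x.2 - A₂.symm (g₂ x) - p.2‖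
            = ‖((x.2 - A₂.symm (g₂ x)) - (p.2 - A₂.symm (g₂ p))) - A₂.symm (g₂ p)‖ := by
              congr 1; abel
          _ ≤ a₂ * d₂ * ‖x - p‖ + a₂ * e₂ :=
              (norm_sub_le _ _).trans (add_le_add (L₂ x hx p hp) b₂)
          _ ≤ a₂ * d₂ * R + a₂ * e₂ := by gcongr
          _ < R := hs₂)
    (fun x hx x' hx' => by
      rw [Prod.norm_def]
      refine max_le ((L₁ x hx x' hx').trans ?_) ((L₂ x hx x' hx').trans ?_)
      · gcongr; exact le_max_left _ _
      · gcongr; exact le_max_right _ _)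
  have hxc := ball_subset_closedBall hx
  refine ⟨x, hx, by simpa using congrArg Prod.fst hfix, by simpa using congrArg Prod.snd hfix,
    fun v hv₁ hv₂ => ?_⟩
  have n₁ : ‖v.1‖ ≤ a₁ * d₁ * ‖v‖ :=
    norm_proj_le_of_apply_eq_zero _ A₁ (ContinuousLinearMap.fst ℝ X₁ X₂) (hd₁ x hxc) hv₁
  have n₂ : ‖v.2‖ ≤ a₂ * d₂ * ‖v‖ :=
    norm_proj_le_of_apply_eq_zero _ A₂ (ContinuousLinearMap.snd ℝ X₁ X₂) (hd₂ x hxc) hv₂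
  have hvK : ‖v‖ ≤ K * ‖v‖ := by
    conv_lhs => rw [Prod.norm_def]
    refine max_le (n₁.trans ?_) (n₂.trans ?_)
    · gcongr; exact le_max_left _ _
    · gcongr; exact le_max_right _ _
  by_contra hne
  nlinarith [norm_pos_iff.mpr hne]

/-- The partial derivative of a `C²` map with respect to its space variable depends
differentiably on the parameter. -/
theorem differentiable_fderiv_param {X Y : Type*} [NormedAddCommGroup X] [NormedSpace ℝ X]
    [NormedAddCommGroup Y] [NormedSpace ℝ Y] {f : ℝ × X → Y} (hf : ContDiff ℝ 2 f) (x : X) :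
    Differentiable ℝ (fun t => fderiv ℝ (fun x' => f (t, x')) x) := by
  have h : ContDiff ℝ 1 (fun t : ℝ => fderiv ℝ (fun x' => f (t, x')) x) :=
    ContDiff.fderiv (f := fun t x' => f (t, x')) (g := fun _ => x) (n := 1) (m := 2) hf
      contDiff_const one_add_one_eq_two.le
  exact h.differentiable one_ne_zero

/-- A map vanishing on a closed ball has vanishing derivative on that closed ball. -/
theorem fderiv_eq_zero_of_eqOn_closedBall {X Y : Type*} [NormedAddCommGroup X]
    [NormedSpace ℝ X] [NormedAddCommGroup Y] [NormedSpace ℝ Y] {f : X → Y}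
    (hf : ContDiff ℝ 1 f) {p : X} {R : ℝ} (hR : 0 < R) (h : ∀ x ∈ closedBall p R, f x = 0)
    {x : X} (hx : x ∈ closedBall p R) : fderiv ℝ f x = 0 := by
  have hclosed : IsClosed {u : X | fderiv ℝ f u = 0} :=
    isClosed_eq (hf.continuous_fderiv one_ne_zero) continuous_const
  have hball : ball p R ⊆ {u : X | fderiv ℝ f u = 0} := fun u hu => by
    have hev : f =ᶠ[nhds u] fun _ => (0 : Y) :=
      Filter.eventually_of_mem (isOpen_ball.mem_nhds hu)
        fun v hv => h v (ball_subset_closedBall hv)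
    simp [hev.fderiv_eq]
  rw [← closure_ball p hR.ne'] at hx
  exact closure_minimal hball hclosed hx

/-- The graph component of a `C²` parameterization, at a fixed parameter, is differentiable. -/
theorem differentiableAt_graph_component {X Y Z : Type*}
    [NormedAddCommGroup X] [NormedSpace ℝ X] [NormedAddCommGroup Y] [NormedSpace ℝ Y]
    [NormedAddCommGroup Z] [NormedSpace ℝ Z] {E : Set ℝ} {U : Set X} {V : Set Z}
    (hU : IsOpen U) (hV : IsOpen V) {w : ℝ × (X × Z) → X × Y × Z} {φ : ℝ × X × Z → X × Z}
    (hw : ContDiffOn ℝ 2 w (E ×ˢ (univ : Set (X × Z))))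
    (hφ : ContDiffOn ℝ 2 φ (E ×ˢ U ×ˢ V)) {ε : ℝ} (hε : ε ∈ E) {x : X} {z : Z}
    (hx : x ∈ U) (hz : z ∈ V) :
    DifferentiableAt ℝ (fun u : X × Z => (w (ε, φ (ε, u.1, u.2))).2.1) (x, z) := by
  have h₁ : ContDiffOn ℝ 2 (fun u : X × Z => φ (ε, u.1, u.2)) (U ×ˢ V) :=
    hφ.comp (contDiff_const.prodMk (contDiff_fst.prodMk contDiff_snd)).contDiffOn
      fun u hu => ⟨hε, hu.1, hu.2⟩
  have h₂ : ContDiffOn ℝ 2 (fun u : X × Z => w (ε, φ (ε, u.1, u.2))) (U ×ˢ V) :=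
    hw.comp (contDiffOn_const.prodMk h₁) fun u _ => ⟨hε, mem_univ _⟩
  have h₃ := (h₂.differentiableOn two_ne_zero).differentiableAt
    ((hU.prod hV).mem_nhds (show (x, z) ∈ U ×ˢ V from ⟨hx, hz⟩))
  exact h₃.snd.fst

/-- Two graphs `(x, z) ↦ (x, h(x, z), z)` whose difference has surjective derivative in `x` have
tangent spaces that span. -/
theorem exists_fderiv_graph_add_eq {X Y Z : Type*}
    [NormedAddCommGroup X] [NormedSpace ℝ X] [NormedAddCommGroup Y] [NormedSpace ℝ Y]
    [NormedAddCommGroup Z] [NormedSpace ℝ Z] {h h' : X × Z → Y} {x : X} {z : Z}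
    (hd : DifferentiableAt ℝ h (x, z)) (hd' : DifferentiableAt ℝ h' (x, z))
    (hsurj : Function.Surjective (fderiv ℝ (fun u => h (u, z) - h' (u, z)) x))
    (q : X × Y × Z) :
    ∃ a a' : X × Z, fderiv ℝ (fun u : X × Z => (u.1, h u, u.2)) (x, z) a
      + fderiv ℝ (fun u : X × Z => (u.1, h' u, u.2)) (x, z) a' = q := by
  have hG : ∀ {h : X × Z → Y}, DifferentiableAt ℝ h (x, z) → ∀ a,
      fderiv ℝ (fun u : X × Z => (u.1, h u, u.2)) (x, z) a
        = (a.1, fderiv ℝ h (x, z) a, a.2) := fun {h} hd a => by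
    have := hasFDerivAt_fst (𝕜 := ℝ) (p := (x, z)) |>.prodMk
      (hd.hasFDerivAt.prodMk (hasFDerivAt_snd (𝕜 := ℝ) (p := (x, z))))
    rw [this.fderiv]
    rfl
  have hslice : ∀ {h : X × Z → Y}, DifferentiableAt ℝ h (x, z) →
      HasFDerivAt (fun u => h (u, z))
        ((fderiv ℝ h (x, z)).comp (ContinuousLinearMap.inl ℝ X Z)) x := fun hd =>
    HasFDerivAt.comp x hd.hasFDerivAt (hasFDerivAt_prodMk_left x z)
  rw [((hslice hd).fun_sub (hslice hd')).fderiv] at hsurj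
  obtain ⟨v, hv⟩ := hsurj
    (q.2.1 - fderiv ℝ h (x, z) (0, q.2.2) - fderiv ℝ h' (x, z) (q.1, 0))
  refine ⟨(v, q.2.2), (q.1 - v, 0), ?_⟩
  have e₁ : fderiv ℝ h (x, z) (v, q.2.2)
      = fderiv ℝ h (x, z) (v, 0) + fderiv ℝ h (x, z) (0, q.2.2) := by
    rw [← map_add]; simp
  have e₂ : fderiv ℝ h' (x, z) (q.1 - v, 0)
      = fderiv ℝ h' (x, z) (q.1, 0) - fderiv ℝ h' (x, z) (v, 0) := by
    rw [← map_sub]; simp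
  have hv' : fderiv ℝ h (x, z) (v, 0) - fderiv ℝ h' (x, z) (v, 0)
      = q.2.1 - fderiv ℝ h (x, z) (0, q.2.2) - fderiv ℝ h' (x, z) (q.1, 0) := by
    simpa using hv
  rw [hG hd, hG hd']
  refine Prod.ext (by simp) (Prod.ext ?_ (by simp))
  simp only [Prod.snd_add, Prod.fst_add, e₁, e₂]
  rw [← sub_eq_zero] at hv' ⊢
  rw [← hv']
  abel

/-- **Transversal intersection of center-unstable and center-stable manifolds.**
In the NHIM setting with equal-dimensional stable and unstable directions, with
`ℝ^k` identified with `X₁ × X₂` and the distance function satisfying the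
quantitative hypotheses (⋆), for fixed `ε ∈ (0,ε₀]` there is `x* ∈ B(p,R)` at which
the manifolds meet, and the ranges of the derivatives of the graph
parameterizations `G^{cu}(x,z) = (x, π_y w^{cu}(ε,cu(ε,x,z)), z)` and
`G^{cs}(x,z) = (x, π_y w^{cs}(ε,cs(ε,x,z)), z)` at `(x*,z*)` span `ℝ^{2k+c}`. -/
theorem nhim_transversal_intersection
    {X₁ X₂ : Type*}
    [NormedAddCommGroup X₁] [NormedSpace ℝ X₁] [FiniteDimensional ℝ X₁]
    [NormedAddCommGroup X₂] [NormedSpace ℝ X₂] [FiniteDimensional ℝ X₂]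
    (c : ℕ) (hc : 1 ≤ c) (ε₀ R : ℝ) (hε₀ : 0 < ε₀) (hR : 0 < R)
    (U : Set (X₁ × X₂)) (hU : IsOpen U)
    (V : Set (Fin c → ℝ)) (hV : IsOpen V)
    (wcu wcs : ℝ × ((X₁ × X₂) × (Fin c → ℝ)) →
      (X₁ × X₂) × (X₁ × X₂) × (Fin c → ℝ))
    (hwcu : ContDiffOn ℝ 2 wcu
      (Icc 0 ε₀ ×ˢ (univ : Set ((X₁ × X₂) × (Fin c → ℝ)))))
    (hwcs : ContDiffOn ℝ 2 wcs
      (Icc 0 ε₀ ×ˢ (univ : Set ((X₁ × X₂) × (Fin c → ℝ)))))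
    (cu cs : ℝ × (X₁ × X₂) × (Fin c → ℝ) → (X₁ × X₂) × (Fin c → ℝ))
    (hcu : ContDiffOn ℝ 2 cu (Icc 0 ε₀ ×ˢ U ×ˢ V))
    (hcs : ContDiffOn ℝ 2 cs (Icc 0 ε₀ ×ˢ U ×ˢ V))
    (hcux : ∀ ε ∈ Icc (0:ℝ) ε₀, ∀ x ∈ U, ∀ z ∈ V,
      ((wcu (ε, cu (ε, x, z))).1, (wcu (ε, cu (ε, x, z))).2.2) = (x, z))
    (hcsx : ∀ ε ∈ Icc (0:ℝ) ε₀, ∀ x ∈ U, ∀ z ∈ V,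
      ((wcs (ε, cs (ε, x, z))).1, (wcs (ε, cs (ε, x, z))).2.2) = (x, z))
    (zs : Fin c → ℝ) (hzs : zs ∈ V)
    (y : ℝ × (X₁ × X₂) → X₁ × X₂)
    (hydef : ∀ ε x, y (ε, x)
      = (wcu (ε, cu (ε, x, zs))).2.1 - (wcs (ε, cs (ε, x, zs))).2.1)
    (p : X₁ × X₂) (hpU : closedBall p R ⊆ U)
    (hy : ContDiff ℝ 2 y)
    (hyp : y (0, p) = 0)
    (hy₂ : ∀ x ∈ closedBall p R, (y (0, x)).2 = 0)
    (A₁₁ : X₁ ≃L[ℝ] X₁) (A₂₂ : X₂ ≃L[ℝ] X₂)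
    (hA₁₁ : (A₁₁ : X₁ →L[ℝ] X₁) = fderiv ℝ (fun x₁ => (y (0, (x₁, p.2))).1) p.1)
    (hA₂₂ : (A₂₂ : X₂ →L[ℝ] X₂)
      = deriv (fun ε => fderiv ℝ (fun x₂ => (y (ε, (p.1, x₂))).2) p.2) 0)
    (δ₁ δ₂ η₁ η₂ : ℝ)
    (hδ₁0 : 0 ≤ δ₁) (hδ₂0 : 0 ≤ δ₂) (hη₁0 : 0 ≤ η₁) (hη₂0 : 0 ≤ η₂)
    (hδ₁ : ∀ ε ∈ Icc (0:ℝ) ε₀, ∀ x ∈ closedBall p R,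
      ‖fderiv ℝ (fun x' => (y (ε, x')).1) x
        - (A₁₁ : X₁ →L[ℝ] X₁).comp (ContinuousLinearMap.fst ℝ X₁ X₂)‖ ≤ δ₁)
    (hδ₂ : ∀ ε ∈ Icc (0:ℝ) ε₀, ∀ x ∈ closedBall p R,
      ‖deriv (fun ε' => fderiv ℝ (fun x' => (y (ε', x')).2) x) ε
        - (A₂₂ : X₂ →L[ℝ] X₂).comp (ContinuousLinearMap.snd ℝ X₁ X₂)‖ ≤ δ₂)
    (hη₁ : ∀ ε ∈ Icc (0:ℝ) ε₀, ‖deriv (fun ε' => (y (ε', p)).1) ε‖ ≤ η₁)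
    (hη₂ : ∀ ε ∈ Icc (0:ℝ) ε₀, ‖deriv (fun ε' => (y (ε', p)).2) ε‖ ≤ η₂)
    (hm₁ : ε₀ * η₁ + δ₁ * R < ‖(A₁₁.symm : X₁ →L[ℝ] X₁)‖⁻¹ * R)
    (hm₂ : η₂ + δ₂ * R < ‖(A₂₂.symm : X₂ →L[ℝ] X₂)‖⁻¹ * R)
    (ε : ℝ) (hε : ε ∈ Ioc 0 ε₀) :
    ∃ xs ∈ ball p R,
      wcu (ε, cu (ε, xs, zs)) = wcs (ε, cs (ε, xs, zs)) ∧
      ∀ q : (X₁ × X₂) × (X₁ × X₂) × (Fin c → ℝ),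
        ∃ acu acs : (X₁ × X₂) × (Fin c → ℝ),
          fderiv ℝ (fun w : (X₁ × X₂) × (Fin c → ℝ) =>
              (w.1, (wcu (ε, cu (ε, w.1, w.2))).2.1, w.2)) (xs, zs) acu
          + fderiv ℝ (fun w : (X₁ × X₂) × (Fin c → ℝ) =>
              (w.1, (wcs (ε, cs (ε, w.1, w.2))).2.1, w.2)) (xs, zs) acs = q := by
  have : CompleteSpace X₁ := FiniteDimensional.complete ℝ X₁
  have : CompleteSpace X₂ := FiniteDimensional.complete ℝ X₂
  have hε0 : 0 < ε := hε.1
  have hεE : ε ∈ Icc 0 ε₀ := ⟨hε.1.le, hε.2⟩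
  have h0E : (0 : ℝ) ∈ Icc 0 ε₀ := ⟨le_rfl, hε₀.le⟩
  have hpR : p ∈ closedBall p R := mem_closedBall_self hR.le
  have hslice : ∀ t, ContDiff ℝ 2 (fun x => y (t, x)) := fun t =>
    hy.comp (contDiff_const.prodMk contDiff_id)
  have hyε : Differentiable ℝ (fun x => y (ε, x)) := (hslice ε).differentiable two_ne_zero
  have hyt : Differentiable ℝ (fun t => y (t, p)) :=
    (hy.comp (contDiff_id.prodMk contDiff_const)).differentiable two_ne_zero
  have hp₁ : ‖(y (ε, p)).1‖ ≤ ε₀ * η₁ := by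
    have := (convex_Icc 0 ε₀).norm_image_sub_le_of_norm_deriv_le (f := fun t => (y (t, p)).1)
      (fun t _ => (hyt t).fst) hη₁ h0E hεE
    simp only [hyp, Prod.fst_zero, sub_zero, Real.norm_of_nonneg hε0.le] at this
    nlinarith [hε.2]
  have hp₂ : ‖ε⁻¹ • (y (ε, p)).2‖ ≤ η₂ := by
    have := (convex_Icc 0 ε₀).norm_image_sub_le_of_norm_deriv_le (f := fun t => (y (t, p)).2)
      (fun t _ => (hyt t).snd) hη₂ h0E hεE
    simp only [hyp, Prod.snd_zero, sub_zero, Real.norm_of_nonneg hε0.le] at this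
    rw [norm_smul, Real.norm_of_nonneg (inv_nonneg.mpr hε0.le), inv_mul_le_iff₀ hε0]
    linarith
  have hd₂ : ∀ x ∈ closedBall p R, ‖fderiv ℝ (fun x' => ε⁻¹ • (y (ε, x')).2) x
      - (A₂₂ : X₂ →L[ℝ] X₂).comp (ContinuousLinearMap.snd ℝ X₁ X₂)‖ ≤ δ₂ := fun x hx => by
    set B := (A₂₂ : X₂ →L[ℝ] X₂).comp (ContinuousLinearMap.snd ℝ X₁ X₂)
    have hD := differentiable_fderiv_param (f := fun u => (y u).2) hy.snd x
    have hderiv : ∀ t, HasDerivAt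
        (fun t => fderiv ℝ (fun x' => (y (t, x')).2) x - t • B)
        (deriv (fun t => fderiv ℝ (fun x' => (y (t, x')).2) x) t - B) t := fun t => by
      simpa using (hD t).hasDerivAt.fun_sub ((hasDerivAt_id t).smul_const B)
    have hmv := (convex_Icc 0 ε₀).norm_image_sub_le_of_norm_hasDerivWithin_le
      (fun t _ => (hderiv t).hasDerivWithinAt) (fun t ht => hδ₂ t ht x hx) h0E hεE
    have hzero : fderiv ℝ (fun x' => (y (0, x')).2) x = 0 :=
      fderiv_eq_zero_of_eqOn_closedBall ((hslice 0).snd.of_le (by norm_num)) hR hy₂ hx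
    simp only [hzero, zero_smul, sub_zero, Real.norm_of_nonneg hε0.le] at hmv
    have hsmul : fderiv ℝ (fun x' => ε⁻¹ • (y (ε, x')).2) x - B
        = ε⁻¹ • (fderiv ℝ (fun x' => (y (ε, x')).2) x - ε • B) := by
      rw [fderiv_fun_const_smul (hyε x).snd, smul_sub, smul_smul, inv_mul_cancel₀ hε0.ne',
        one_smul]
    rw [hsmul, norm_smul, Real.norm_of_nonneg (inv_nonneg.mpr hε0.le), inv_mul_le_iff₀ hε0]
    linarith
  obtain ⟨xs, hxs, hz₁, hz₂, hnd⟩ := exists_nondegenerate_zero_mem_ball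
    (g₁ := fun x => (y (ε, x)).1) (g₂ := fun x => ε⁻¹ • (y (ε, x)).2)
    hyε.fst (hyε.snd.const_smul _) hR A₁₁ A₂₂ hδ₁0 hδ₂0 (hδ₁ ε hεE) hd₂ hp₁ hp₂ hm₁ hm₂
  have hxU : xs ∈ U := hpU (ball_subset_closedBall hxs)
  have hzero : y (ε, xs) = 0 :=
    Prod.ext hz₁ ((smul_eq_zero.mp hz₂).resolve_left (inv_ne_zero hε0.ne'))
  have hinj : Function.Injective (fderiv ℝ (fun x => y (ε, x)) xs) := by
    rw [injective_iff_map_eq_zero]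
    intro v hv
    refine hnd v ?_ ?_
    · rw [fderiv.fst (hyε xs)]
      simp [hv]
    · rw [fderiv_fun_const_smul (hyε xs).snd, fderiv.snd (hyε xs)]
      simp [hv]
  have hsurj : Function.Surjective (fderiv ℝ (fun x => y (ε, x)) xs) :=
    LinearMap.injective_iff_surjective
      (f := (fderiv ℝ (fun x => y (ε, x)) xs : X₁ × X₂ →ₗ[ℝ] X₁ × X₂)).mp hinj
  refine ⟨xs, hxs, ?_, fun q => exists_fderiv_graph_add_eq
    (differentiableAt_graph_component hU hV hwcu hcu hεE hxU hzs)
    (differentiableAt_graph_component hU hV hwcs hcs hεE hxU hzs) ?_ q⟩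
  · have h₁ := hcux ε hεE xs hxU zs hzs
    have h₂ := hcsx ε hεE xs hxU zs hzs
    rw [hydef, sub_eq_zero] at hzero
    have h₃ := h₁.trans h₂.symm
    exact Prod.ext (Prod.ext_iff.mp h₃).1 (Prod.ext hzero (Prod.ext_iff.mp h₃).2)
  · simpa only [hydef] using hsurj
end
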